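/- Let V be a vector space over 𝔽₂ of dimension 2g and B a nondegenerate alternating bilinear form on V. Then exactly 2^(g−1)(2^g + 1) quadratic refinements q of B are even (i.e. have exactly 2^(2g−1) + 2^(g−1) zeros) and exactly 2^(g−1)(2^g − 1) are odd (i.e. have exactly 2^(2g−1) − 2^(g−1) zeros). -/

import Mathlib

/-!
Fix a quadratic refinement `q` of `B` and put `S q = ∑ x, (-1) ^ q x`, which determines the number
of zeros of `q`. The refinements of `B` are the functions `q + B a`, since two of them differ by a
linear form and `B` identifies `V` with its dual. Completing the square gives
`S (q + B a) = (-1) ^ q a * S q`. Summing this over `a` yields `S q ^ 2 = |V| = 2 ^ (2 * g)`, so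
`S` only takes the values `± 2 ^ g`. Moreover the number of refinements with a given value of `S` is
the number of `a` for which `(-1) ^ q a` has a given sign, which `S q` determines in turn.
-/

open Module

section Existence

variable {R M N : Type*} [CommRing R] [AddCommGroup M] [Module R M] [Module.Free R M]
  [AddCommGroup N] [Module R N]

theorem exists_polarBilin_eq {B : LinearMap.BilinMap R M N} (hB : B.IsAlt) (hflip : B.flip = B) :
    ∃ Q : QuadraticMap R M N, Q.polarBilin = B := by
  obtain ⟨ι, b⟩ := Module.Free.exists_basis (R := R) (M := M)
  let : LinearOrder ι := IsWellOrder.linearOrder WellOrderingRel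
  -- `B` is its strictly upper triangular part `A` plus the transpose of `A`, so `B` is the
  -- polarization of `x ↦ A x x`.
  let A : LinearMap.BilinMap R M N :=
    b.constr R fun i ↦ b.constr R fun j ↦ if i < j then B (b i) (b j) else 0
  have hA (i j : ι) : A (b i) (b j) = if i < j then B (b i) (b j) else 0 := by
    simp only [A, Basis.constr_basis]
  refine ⟨A.toQuadraticMap, ?_⟩
  rw [LinearMap.BilinMap.polarBilin_toQuadraticMap]
  refine b.ext fun i ↦ b.ext fun j ↦ ?_
  simp only [LinearMap.add_apply, LinearMap.flip_apply, hA]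
  obtain hij | rfl | hji := lt_trichotomy i j
  · simp [hij, hij.not_gt]
  · simp [hB.self_eq_zero]
  · simp [hji, hji.not_gt, ← LinearMap.flip_apply B (b j), hflip]

end Existence

section SignSum

variable {α V : Type*} [Fintype α] [AddCommGroup V] [Module (ZMod 2) V] [Fintype V]

/-- The nontrivial additive character `a ↦ (-1) ^ a` of `𝔽₂`. -/
def signChar : AddChar (ZMod 2) ℤ :=
  AddChar.zmodChar 2 (neg_one_sq : (-1 : ℤ) ^ 2 = 1)

theorem signChar_eq_one_iff {a : ZMod 2} : signChar a = 1 ↔ a = 0 := by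
  revert a; decide

/-- The exponential sum `∑ x, (-1) ^ f x` of an `𝔽₂`-valued function; when `f` is a quadratic form,
it is the quadratic Gauss sum of `f`. -/
def signSum (f : α → ZMod 2) : ℤ :=
  ∑ x, signChar (f x)

theorem two_mul_card_signChar_eq (f : α → ZMod 2) (ε : ℤˣ) :
    2 * (Nat.card {x // signChar (f x) = ε} : ℤ) = Fintype.card α + ε * signSum f := by
  classical
  have hpoint (a : ZMod 2) : (if signChar a = ε then 2 else 0 : ℤ) = 1 + ε * signChar a := by
    revert a ε; decide
  calc 2 * (Nat.card {x // signChar (f x) = ε} : ℤ)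
      = ∑ x, if signChar (f x) = ε then 2 else 0 := by
        rw [Nat.card_eq_fintype_card, Fintype.card_subtype, ← Finset.sum_filter,
          Finset.sum_const, nsmul_eq_mul, mul_comm]
    _ = Fintype.card α + ε * signSum f := by
        simp [hpoint, Finset.sum_add_distrib, Finset.mul_sum, signSum]

theorem card_zeros_eq_iff_signSum_eq {k : ℕ} (hα : Fintype.card α = 2 ^ (2 * (k + 1)))
    (f : α → ZMod 2) (ε : ℤˣ) :
    (Nat.card {x // f x = 0} : ℤ) = 2 ^ (2 * k + 1) + ε * 2 ^ k ↔
      signSum f = ε * 2 ^ (k + 1) := by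
  have hzeros := two_mul_card_signChar_eq f 1
  simp only [Units.val_one, signChar_eq_one_iff, hα] at hzeros
  push_cast [mul_add, pow_add] at hzeros ⊢
  constructor <;> intro h <;> linarith

theorem signSum_linearMap_eq_zero {f : V →ₗ[ZMod 2] ZMod 2} (hf : f ≠ 0) : signSum f = 0 := by
  refine AddChar.sum_eq_zero_iff_ne_zero (ψ := signChar.compAddMonoidHom f.toAddMonoidHom) |>.2 ?_
  contrapose! hf
  ext x
  exact signChar_eq_one_iff.1 (DFunLike.congr_fun hf x)

end SignSum

/-- `q` is a quadratic refinement of the bilinear form `B` over `𝔽₂`: its polarization is `B`. As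
usual in characteristic 2, the polarization is written with plus signs. -/
def IsQuadraticRefinement {V : Type*} [AddCommGroup V] [Module (ZMod 2) V]
    (B : LinearMap.BilinForm (ZMod 2) V) (q : V → ZMod 2) : Prop :=
  ∀ x y, q (x + y) + q x + q y = B x y

namespace IsQuadraticRefinement

variable {V : Type*} [AddCommGroup V] [Module (ZMod 2) V] {B : LinearMap.BilinForm (ZMod 2) V}
  {p q : V → ZMod 2}

theorem exists_of_isAlt (hB : B.IsAlt) : ∃ q, IsQuadraticRefinement B q := by
  have hflip : LinearMap.flip B = B := by
    ext x y
    rw [LinearMap.flip_apply, ← hB.neg_eq x y, CharTwo.neg_eq]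
  obtain ⟨Q, rfl⟩ := exists_polarBilin_eq hB hflip
  exact ⟨Q, fun x y ↦ by simp [QuadraticMap.polar, CharTwo.sub_eq_add]⟩

theorem apply_add (hq : IsQuadraticRefinement B q) (x y : V) :
    q (x + y) = q x + q y + B x y := by
  grind [hq x y]

theorem apply_zero (hq : IsQuadraticRefinement B q) : q 0 = 0 := by
  simpa using hq.apply_add 0 0

theorem bilin_comm (hq : IsQuadraticRefinement B q) (x y : V) : B x y = B y x := by
  rw [← hq x y, ← hq y x, add_comm x y, add_right_comm]

theorem add_linearMap (hq : IsQuadraticRefinement B q) (f : V →ₗ[ZMod 2] ZMod 2) :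
    IsQuadraticRefinement B (q + ⇑f) := by
  intro x y
  simp only [Pi.add_apply, map_add, ← hq x y]
  grind

theorem exists_add_linearMap_eq (hq : IsQuadraticRefinement B q)
    (hp : IsQuadraticRefinement B p) : ∃ f : V →ₗ[ZMod 2] ZMod 2, q + ⇑f = p := by
  have hadd (x y : V) : (p - q) (x + y) = (p - q) x + (p - q) y := by
    simp only [Pi.sub_apply, hp.apply_add, hq.apply_add]
    abel
  exact ⟨(AddMonoidHom.mk' (p - q) hadd).toZModLinearMap 2, add_sub_cancel q p⟩

theorem setOf_eq_range [FiniteDimensional (ZMod 2) V] (hq : IsQuadraticRefinement B q)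
    (hB : Function.Injective B) :
    {p | IsQuadraticRefinement B p} = Set.range fun a ↦ q + ⇑(B a) := by
  have hsurj : Function.Surjective B :=
    (LinearMap.injective_iff_surjective_of_finrank_eq_finrank Subspace.dual_finrank_eq.symm).1 hB
  refine Set.Subset.antisymm (fun p hp ↦ ?_) (Set.range_subset_iff.2 fun a ↦ hq.add_linearMap (B a))
  obtain ⟨f, rfl⟩ := hq.exists_add_linearMap_eq hp
  exact (hsurj f).imp fun a ha ↦ congrArg (fun l : Dual (ZMod 2) V ↦ q + ⇑l) ha

theorem card_setOf_and [FiniteDimensional (ZMod 2) V] (hq : IsQuadraticRefinement B q)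
    (hB : Function.Injective B) (P : (V → ZMod 2) → Prop) :
    Nat.card {p | IsQuadraticRefinement B p ∧ P p} = Nat.card {a | P (q + ⇑(B a))} := by
  have hinj : Function.Injective fun a ↦ q + ⇑(B a) :=
    (add_right_injective q).comp (DFunLike.coe_injective.comp hB)
  rw [← Nat.card_image_of_injective hinj, Set.ofPred_and, hq.setOf_eq_range hB]
  congr! 2
  exact Set.image_preimage_eq_range_inter.symm

variable [Fintype V]

theorem signSum_add_bilin (hq : IsQuadraticRefinement B q) (a : V) :
    signSum (q + ⇑(B a)) = signChar (q a) * signSum q := by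
  have hsquare (x : V) : (q + ⇑(B a)) x = q a + q (x + a) := by
    grind [hq x a, hq.bilin_comm x a, Pi.add_apply]
  simp only [signSum, hsquare, AddChar.map_add_eq_mul, Finset.mul_sum]
  exact Equiv.sum_comp (Equiv.addRight a) fun x ↦ signChar (q a) * signChar (q x)

theorem signSum_sq (hq : IsQuadraticRefinement B q) (hB : Function.Injective B) :
    signSum q ^ 2 = Fintype.card V := by
  calc signSum q ^ 2 = ∑ a, signChar (q a) * signSum q := by
        rw [sq, ← Finset.sum_mul, ← signSum]
    _ = ∑ a, ∑ x, signChar (q x) * signChar (B a x) := by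
        simp only [← hq.signSum_add_bilin]
        simp only [signSum, Pi.add_apply, AddChar.map_add_eq_mul]
    _ = ∑ x, ∑ a, signChar (q x) * signChar (B x a) := by
        rw [Finset.sum_comm]
        exact Finset.sum_congr rfl fun x _ ↦ Finset.sum_congr rfl fun a _ ↦ by rw [hq.bilin_comm]
    _ = ∑ x, signChar (q x) * signSum (B x) := by
        simp only [signSum, Finset.mul_sum]
    _ = signChar (q 0) * signSum (B 0) := by
        refine Finset.sum_eq_single_of_mem 0 (Finset.mem_univ 0) fun x _ hx ↦ ?_
        rw [signSum_linearMap_eq_zero ((map_ne_zero_iff B hB).2 hx), mul_zero]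
    _ = Fintype.card V := by
        simp [hq.apply_zero, signSum]

theorem exists_signSum_eq (hq : IsQuadraticRefinement B q) (hB : Function.Injective B) {g : ℕ}
    (hV : Fintype.card V = 2 ^ (2 * g)) : ∃ η : ℤˣ, signSum q = η * 2 ^ g := by
  have hsq : signSum q ^ 2 = (2 ^ g) ^ 2 := by
    rw [hq.signSum_sq hB, hV]
    push_cast
    ring
  obtain h | h := sq_eq_sq_iff_eq_or_eq_neg.1 hsq
  · exact ⟨1, by simp [h]⟩
  · exact ⟨-1, by simp [h]⟩

theorem two_mul_card_setOf_signSum_eq (hBalt : B.IsAlt) (hB : Function.Injective B) {g : ℕ}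
    (hV : Fintype.card V = 2 ^ (2 * g)) (ε : ℤˣ) :
    2 * (Nat.card {q | IsQuadraticRefinement B q ∧ signSum q = ε * 2 ^ g} : ℤ) =
      2 ^ (2 * g) + ε * 2 ^ g := by
  obtain ⟨q, hq⟩ := exists_of_isAlt hBalt
  obtain ⟨η, hη⟩ := hq.exists_signSum_eq hB hV
  have hηη : (η * η : ℤ) = 1 := by rw [← Units.val_mul, Int.units_mul_self, Units.val_one]
  have hsign (a : V) : signSum (q + ⇑(B a)) = ε * 2 ^ g ↔ signChar (q a) = (ε * η : ℤˣ) := by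
    rw [hq.signSum_add_bilin, hη, ← mul_assoc, mul_left_inj' (by positivity), Units.val_mul,
      ← Units.eq_mul_inv_iff_mul_eq, Int.units_inv_eq_self]
  calc 2 * (Nat.card {q | IsQuadraticRefinement B q ∧ signSum q = ε * 2 ^ g} : ℤ)
      = 2 * (Nat.card {a // signChar (q a) = (ε * η : ℤˣ)} : ℤ) := by
        rw [hq.card_setOf_and hB]
        simp only [hsign, Set.coe_ofPred]
    _ = 2 ^ (2 * g) + (ε * η : ℤˣ) * (η * 2 ^ g) := by
        rw [two_mul_card_signChar_eq q, hη, hV, Nat.cast_pow, Nat.cast_ofNat]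
    _ = 2 ^ (2 * g) + ε * 2 ^ g := by
        push_cast
        linear_combination (ε * 2 ^ g : ℤ) * hηη

theorem card_setOf_card_zeros_eq (hBalt : B.IsAlt) (hB : Function.Injective B) {k : ℕ}
    (hV : Fintype.card V = 2 ^ (2 * (k + 1))) (ε : ℤˣ) :
    (Nat.card {q | IsQuadraticRefinement B q ∧
      (Nat.card {v // q v = 0} : ℤ) = 2 ^ (2 * k + 1) + ε * 2 ^ k} : ℤ) =
      2 ^ k * (2 ^ (k + 1) + ε) := by
  simp only [card_zeros_eq_iff_signSum_eq hV]
  refine mul_left_cancel₀ two_ne_zero ?_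
  rw [two_mul_card_setOf_signSum_eq hBalt hB hV]
  ring

end IsQuadraticRefinement

/-- On a `2g`-dimensional `𝔽₂`-vector space with a nondegenerate alternating bilinear
form `B`, exactly `2^(g-1)(2^g + 1)` quadratic refinements of `B` are even (have
`2^(2g-1) + 2^(g-1)` zeros) and exactly `2^(g-1)(2^g - 1)` are odd (have
`2^(2g-1) - 2^(g-1)` zeros). -/
theorem count_even_and_odd_quadratic_refinements
    (V : Type*) [AddCommGroup V] [Module (ZMod 2) V] [Fintype V] (g : ℕ) (hg : 1 ≤ g)
    (hdim : Module.finrank (ZMod 2) V = 2 * g)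
    (B : V →ₗ[ZMod 2] V →ₗ[ZMod 2] ZMod 2) (hB : ∀ v : V, B v v = 0)
    (hnd : ∀ v : V, B v = 0 → v = 0) :
    Nat.card {q : V → ZMod 2 | (∀ x y : V, q (x + y) + q x + q y = B x y) ∧
        Nat.card {v : V // q v = 0} = 2 ^ (2 * g - 1) + 2 ^ (g - 1)} =
      2 ^ (g - 1) * (2 ^ g + 1) ∧
    Nat.card {q : V → ZMod 2 | (∀ x y : V, q (x + y) + q x + q y = B x y) ∧
        Nat.card {v : V // q v = 0} = 2 ^ (2 * g - 1) - 2 ^ (g - 1)} =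
      2 ^ (g - 1) * (2 ^ g - 1) := by
  obtain ⟨k, rfl⟩ := Nat.exists_eq_add_of_le' hg
  have hV : Fintype.card V = 2 ^ (2 * (k + 1)) := by
    rw [Module.card_eq_pow_finrank (K := ZMod 2), hdim, ZMod.card]
  have hinj : Function.Injective B := (injective_iff_map_eq_zero B).2 hnd
  have hcount := IsQuadraticRefinement.card_setOf_card_zeros_eq hB hinj hV
  have hle : 2 ^ k ≤ 2 ^ (2 * k + 1) := Nat.pow_le_pow_right two_pos (by omega)
  have hexp : 2 * (k + 1) - 1 = 2 * k + 1 := by omega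
  rw [hexp, Nat.add_sub_cancel]
  constructor
  · zify
    simpa [IsQuadraticRefinement] using hcount 1
  · zify [hle, Nat.one_le_two_pow (n := k + 1)]
    simpa [IsQuadraticRefinement, sub_eq_add_neg] using hcount (-1)
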